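/- Proposition 3.4 (subadditive Ledrappier criterion). Let (X,f) be an expansive homeomorphism of a compact metric space and let Φ = {log φ_n}_{n∈ℕ} be a subadditive potential on X with a unique equilibrium state μ. If the product measure μ×μ is the unique equilibrium state on (X×X, f×f) for the subadditive potential Ψ = {log ψ_n} with ψ_n(x,y) = φ_n(x)·φ_n(y), then μ has the K-property. -/

import Mathlib

/-!
The proof follows Ledrappier. Expansivity provides a finite partition `α` of small diameter whose
two-sided itineraries separate points, hence generate the Borel σ-algebra; the partition `α × α`
of `X × X` is then a generator too. By the Kolmogorov–Sinai theorem
(`entropyKS_eq_of_generator`) the entropies of all invariant measures on `X × X` are entropies of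
`α × α`.

Let `K` be the σ-algebra generated by the future of `α` and `T` its remote future
`⋂ₙ f⁻ⁿ K`. Only the triviality of `T` is not immediate in the K-property. Let `ν` be the
relatively independent self-joining of `μ` over `T`. It is invariant under `f × f` because `T` is
invariant, and since its marginals are `μ`, the integrals of `log ψ_n` against `ν` and `μ × μ`
agree. Its entropy also agrees with that of `μ × μ`: for each `n`, conditional independence gives

  `H_ν((α × α)ⁿ) ≥ 2 H_μ(αⁿ | T) ≥ 2 n h_μ(f, α)`,

the last inequality because `T` is contained in the future from time `n` on
(`IsCondJoining.two_mul_condInfo_le`, `mul_entropyOfPart_le_condInfo`), while subadditivity gives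
the opposite bound in the limit. So `ν` is an equilibrium state for `Ψ`, and by uniqueness
`ν = μ × μ`. Then every `A ∈ T` satisfies `μ A = ν (A × A) = (μ A)²`, so `T` is trivial.
-/

open Filter MeasureTheory
open scoped ENNReal

namespace SubEq

variable {X : Type*}

/-! ### Bowen balls, separated sets, topological pressure -/

/-- The Bowen ball `B_n(x,ε)` with respect to a distance function `ρ` and a map `f`. -/
def bowenBall (ρ : X → X → ℝ) (f : X → X) (n : ℕ) (ε : ℝ) (x : X) : Set X :=
  {y | ∀ k < n, ρ (f^[k] x) (f^[k] y) ≤ ε}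

/-- `E` is `(n,ε)`-separated for `f` with respect to the distance `ρ`. -/
def IsSeparatedSet (ρ : X → X → ℝ) (f : X → X) (n : ℕ) (ε : ℝ) (E : Finset X) : Prop :=
  ∀ x ∈ E, ∀ y ∈ E, x ≠ y → ∃ k < n, ε ≤ ρ (f^[k] x) (f^[k] y)

/-- The subadditive topological pressure
`P(Φ) = lim_{ε→0} limsup_n (1/n) log sup { Σ_{x∈E} φ_n x : E (n,ε)-separated }`;
since the inner quantity is monotone as `ε` decreases, the limit as `ε → 0` is the
supremum over `ε > 0`. -/
noncomputable def pressure (ρ : X → X → ℝ) (f : X → X) (φ : ℕ → X → ℝ) : ℝ :=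
  sSup {p : ℝ | ∃ ε > (0:ℝ), p = atTop.limsup (fun n =>
    Real.log (sSup ((fun E : Finset X => ∑ x ∈ E, φ n x) ''
      {E : Finset X | IsSeparatedSet ρ f n ε E})) / n)}

/-- `Φ = {log φ_n}` is a subadditive potential on `(X,f)`:
each `φ_n` is continuous and positive and
`log φ_{m+n} ≤ log φ_m + log φ_n ∘ f^m`. -/
def IsSubadditivePotential [TopologicalSpace X] (f : X → X) (φ : ℕ → X → ℝ) : Prop :=
  (∀ n, Continuous (φ n)) ∧ (∀ n x, 0 < φ n x) ∧
    ∀ m n, 1 ≤ m → 1 ≤ n → ∀ x : X,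
      Real.log (φ (m + n) x) ≤ Real.log (φ m x) + Real.log (φ n (f^[m] x))

/-! ### Kolmogorov–Sinai entropy -/

/-- Static entropy `H_μ(ξ)` of the finite partition of `X` given by the fibers of
`p : X → ι`. -/
noncomputable def partInfo [MeasurableSpace X] (μ : Measure X) {ι : Type} [Fintype ι]
    (p : X → ι) : ℝ :=
  ∑ i : ι, Real.negMulLog ((μ (p ⁻¹' {i})).toReal)

/-- The dynamical refinement `⋁_{k=0}^{n-1} f^{-k} ξ` of the partition given by `p`. -/
def refinePart (f : X → X) {ι : Type} (p : X → ι) (n : ℕ) : X → (Fin n → ι) :=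
  fun x k => p (f^[(k : ℕ)] x)

/-- Entropy of `f` relative to the partition given by `p`; by subadditivity the limit
defining it equals the infimum. -/
noncomputable def entropyOfPart [MeasurableSpace X] (μ : Measure X) (f : X → X)
    {ι : Type} [Fintype ι] (p : X → ι) : ℝ :=
  ⨅ n : ℕ, partInfo μ (refinePart f p (n + 1)) / (n + 1)

/-- The Kolmogorov–Sinai entropy `h_μ(f)`: the supremum over all finite measurable
partitions of the corresponding partition entropies. -/
noncomputable def entropyKS [MeasurableSpace X] (μ : Measure X) (f : X → X) : ℝ :=
  sSup {h : ℝ | ∃ (m : ℕ) (p : X → Fin m),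
    (∀ i, MeasurableSet (p ⁻¹' {i})) ∧ h = entropyOfPart μ f p}

/-! ### Equilibrium states -/

/-- `μ` is an equilibrium state of the subadditive potential `Φ = {log φ_n}`:
it is an `f`-invariant Borel probability measure with
`h_μ(f) + lim_n (1/n) ∫ log φ_n dμ = P(Φ)`. -/
def IsEqState [TopologicalSpace X] [MeasurableSpace X] (ρ : X → X → ℝ) (f : X → X)
    (φ : ℕ → X → ℝ) (μ : Measure X) : Prop :=
  IsProbabilityMeasure μ ∧ MeasurePreserving f μ μ ∧
    ∃ L : ℝ, Tendsto (fun n => (∫ x, Real.log (φ n x) ∂μ) / n) atTop (nhds L) ∧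
      entropyKS μ f + L = pressure ρ f φ

/-- Bounded distortion: there is `C ≥ 1` such that for all sufficiently small `ε > 0`,
all `x`, `n` and all `y,z ∈ B_n(x,ε)` one has `C⁻¹ ≤ φ_n(y)/φ_n(z) ≤ C`. -/
def HasBoundedDistortion (ρ : X → X → ℝ) (f : X → X) (φ : ℕ → X → ℝ) : Prop :=
  ∃ C : ℝ, 1 ≤ C ∧ ∃ ε₀ > (0:ℝ), ∀ ε, 0 < ε → ε ≤ ε₀ → ∀ (x : X) (n : ℕ),
    ∀ y ∈ bowenBall ρ f n ε x, ∀ z ∈ bowenBall ρ f n ε x,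
      C⁻¹ ≤ φ n y / φ n z ∧ φ n y / φ n z ≤ C

/-- The lower subadditive Gibbs property:
for every `ε > 0` there is `C ≥ 1` with `μ(B_n(x,ε)) ≥ C⁻¹ e^{-nP(Φ)} φ_n(x)`. -/
def HasLowerGibbs [TopologicalSpace X] [MeasurableSpace X] (ρ : X → X → ℝ) (f : X → X)
    (φ : ℕ → X → ℝ) (μ : Measure X) : Prop :=
  ∀ ε > (0:ℝ), ∃ C : ℝ, 1 ≤ C ∧ ∀ (x : X) (n : ℕ),
    ENNReal.ofReal (C⁻¹ * Real.exp (-(n : ℝ) * pressure ρ f φ) * φ n x)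
      ≤ μ (bowenBall ρ f n ε x)

/-- Expansivity of an invertible map `f` with inverse `finv`. -/
def IsExpansive (ρ : X → X → ℝ) (f finv : X → X) : Prop :=
  ∃ ε₀ > (0:ℝ), ∀ x y : X,
    (∀ n : ℕ, ρ (f^[n] x) (f^[n] y) ≤ ε₀ ∧ ρ (finv^[n] x) (finv^[n] y) ≤ ε₀) → x = y

/-! ### Mixing properties -/

/-- The Kolmogorov property of the invertible measure-preserving system `(X,μ,f)`
(`finv` is the inverse of `f`): there is a sub-σ-algebra `K` with `K ⊆ fK`,
`⋁_{n≥0} f^n K` the full σ-algebra, and `⋂_{n≥0} f^{-n} K` trivial mod `μ`. -/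
def HasKProperty [m : MeasurableSpace X] (μ : Measure X) (f finv : X → X) : Prop :=
  ∃ K : MeasurableSpace X, K ≤ m ∧ K ≤ K.map f ∧
    (⨆ n : ℕ, K.map (f^[n])) = m ∧
    ∀ A : Set X, MeasurableSet[⨅ n : ℕ, K.map (finv^[n])] A → μ A = 0 ∨ μ A = 1

/-- Mixing of a measure-preserving system. -/
def IsMixing [MeasurableSpace X] (μ : Measure X) (f : X → X) : Prop :=
  ∀ A B : Set X, MeasurableSet A → MeasurableSet B →
    Tendsto (fun n => μ ((f^[n]) ⁻¹' A ∩ B)) atTop (nhds (μ A * μ B))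

/-- A set of natural numbers has upper density zero. -/
def UpperDensityZero (E : Set ℕ) : Prop :=
  Tendsto (fun n => (Nat.card (E ∩ Set.Iio n : Set ℕ) : ℝ) / n) atTop (nhds 0)

/-- Weak mixing: for all measurable `A,B` there is a set `E ⊆ ℕ` of upper density zero
such that `μ(f^n A ∩ B) → μ(A)μ(B)` along `n ∉ E`. -/
def IsWeaklyMixing [MeasurableSpace X] (μ : Measure X) (f : X → X) : Prop :=
  ∀ A B : Set X, MeasurableSet A → MeasurableSet B →
    ∃ E : Set ℕ, UpperDensityZero E ∧
      Tendsto (fun n => μ ((f^[n]) ⁻¹' A ∩ B)) (atTop ⊓ Filter.principal Eᶜ)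
        (nhds (μ A * μ B))

/-- Total ergodicity: `f^n` is ergodic for every `n ≥ 1`. -/
def IsTotallyErgodic [MeasurableSpace X] (μ : Measure X) (f : X → X) : Prop :=
  ∀ n : ℕ, 1 ≤ n → Ergodic (f^[n]) μ

/-! ### Measure-theoretic isomorphism and the Bernoulli property -/

/-- Measure-theoretic isomorphism of the systems `(X,μ,f)` and `(Y,ν,g)`. -/
def IsMeasureIso {Y : Type*} [MeasurableSpace X] [MeasurableSpace Y]
    (μ : Measure X) (ν : Measure Y) (f : X → X) (g : Y → Y) : Prop :=
  ∃ Θ : X → Y, Measurable Θ ∧ Measure.map Θ μ = ν ∧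
    (∀ᵐ x ∂μ, Θ (f x) = g (Θ x)) ∧
    ∃ Ψ : Y → X, Measurable Ψ ∧ (∀ᵐ x ∂μ, Ψ (Θ x) = x) ∧ (∀ᵐ y ∂ν, Θ (Ψ y) = y)

/-- The left shift on a full shift space `ℤ → ι`. -/
def fullShift {ι : Type*} : (ℤ → ι) → (ℤ → ι) := fun x i => x (i + 1)

/-- `(X,μ,f)` is Bernoulli: it is measurably isomorphic to a Bernoulli shift, i.e. to a
two-sided full shift on a finite alphabet equipped with a product (i.i.d.) measure. -/
def IsBernoulli [MeasurableSpace X] (μ : Measure X) (f : X → X) : Prop :=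
  ∃ (m : ℕ) (p : Fin m → ℝ≥0∞), (∑ i : Fin m, p i) = 1 ∧
    ∃ ν : Measure (ℤ → Fin m),
      (∀ (s : Finset ℤ) (a : ℤ → Fin m),
        ν {x : ℤ → Fin m | ∀ i ∈ s, x i = a i} = ∏ i ∈ s, p (a i)) ∧
      IsMeasureIso μ ν f fullShift

/-! ### Conditional entropy of a finite partition -/

/-- The finite partition given by the fibers of `p` is measurable. -/
def MeasPart [MeasurableSpace X] {ι : Type} (p : X → ι) : Prop :=
  ∀ i, MeasurableSet (p ⁻¹' {i})

/-- The σ-algebra generated by the partition given by the fibers of `p`. -/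
abbrev sigmaPart {ι : Type} (p : X → ι) : MeasurableSpace X :=
  MeasurableSpace.comap p ⊤

/-- The conditional entropy `H_μ(p | B)` of a finite partition given a σ-algebra. -/
noncomputable def condInfo [MeasurableSpace X] (μ : Measure X) (B : MeasurableSpace X)
    {ι : Type} [Fintype ι] (p : X → ι) : ℝ :=
  ∫ x, ∑ i, Real.negMulLog ((μ[(p ⁻¹' {i}).indicator (fun _ => (1 : ℝ)) | B]) x) ∂μ

section CondInfo

set_option linter.unusedSectionVars false

variable {B B' : MeasurableSpace X} {mX : MeasurableSpace X} {μ : Measure X} [IsProbabilityMeasure μ]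
  {ι κ τ : Type} [Fintype ι] [Fintype κ] [Fintype τ]

lemma MeasPart.preimage {p : X → ι} (hp : MeasPart p) (s : Set ι) :
    MeasurableSet (p ⁻¹' s) := by
  rw [← Set.biUnion_preimage_singleton]
  exact s.toFinite.measurableSet_biUnion fun i _ => hp i

lemma MeasPart.sigmaPart_le {p : X → ι} (hp : MeasPart p) : sigmaPart p ≤ mX := by
  rintro _ ⟨s, -, rfl⟩
  exact hp.preimage s

lemma MeasPart.comp_meas {Y : Type*} [MeasurableSpace Y] {p : X → ι} (hp : MeasPart p)
    {g : Y → X} (hg : Measurable g) : MeasPart (fun y => p (g y)) :=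
  fun i => hg (hp i)

lemma MeasPart.pair {p : X → ι} {q : X → κ} (hp : MeasPart p) (hq : MeasPart q) :
    MeasPart (fun x => (p x, q x)) := by
  rintro ⟨i, j⟩
  convert! (hp i).inter (hq j) using 1
  ext x
  simp

lemma MeasPart.refine {p : X → ι} (hp : MeasPart p) {f : X → X} (hf : Measurable f) (n : ℕ) :
    MeasPart (refinePart f p n) := by
  intro c
  have : refinePart f p n ⁻¹' {c} = ⋂ k : Fin n, (f^[(k : ℕ)]) ⁻¹' (p ⁻¹' {c k}) := by
    ext x
    simp [refinePart, funext_iff]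
  rw [this]
  exact MeasurableSet.iInter fun k => (hf.iterate _) (hp _)

lemma sigmaPart_mono {p : X → ι} {q : X → κ} (g : κ → ι) (h : ∀ x, p x = g (q x)) :
    sigmaPart p ≤ sigmaPart q := by
  rintro _ ⟨s, -, rfl⟩
  refine ⟨g ⁻¹' s, trivial, ?_⟩
  ext x
  simp [h]

lemma integrable_ind {A : Set X} (hA : MeasurableSet A) :
    Integrable (A.indicator (fun _ => (1 : ℝ))) μ :=
  (integrable_const _).indicator hA

lemma condExp_ind_mem {A : Set X} (hA : MeasurableSet A) :
    ∀ᵐ x ∂μ, (μ[A.indicator (fun _ => (1 : ℝ)) | B]) x ∈ Set.Icc (0 : ℝ) 1 := by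
  by_cases hB : B ≤ mX
  · have h0 : 0 ≤ᵐ[μ] μ[A.indicator (fun _ => (1 : ℝ)) | B] :=
      condExp_nonneg (ae_of_all _ fun x => Set.indicator_nonneg (fun _ _ => zero_le_one) x)
    have h1 : μ[A.indicator (fun _ => (1 : ℝ)) | B] ≤ᵐ[μ] μ[fun _ => (1 : ℝ) | B] :=
      condExp_mono (integrable_ind hA) (integrable_const _)
        (ae_of_all _ fun x => Set.indicator_le_self' (fun _ _ => zero_le_one) x)
    rw [condExp_const hB] at h1
    filter_upwards [h0, h1] with x a b using ⟨a, b⟩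
  · simp [condExp_of_not_le hB]

lemma condExp_ind_sum (hB : B ≤ mX) {p : X → ι} (hp : MeasPart p) :
    ∀ᵐ x ∂μ, ∑ i, (μ[(p ⁻¹' {i}).indicator (fun _ => (1 : ℝ)) | B]) x = 1 := by
  have h := condExp_finsetSum (μ := μ) (s := Finset.univ)
    (f := fun i => (p ⁻¹' {i}).indicator (fun _ => (1 : ℝ))) (fun i _ => integrable_ind (hp i)) B
  have e : ∑ i, (p ⁻¹' {i}).indicator (fun _ => (1 : ℝ)) = fun _ => (1 : ℝ) := by
    classical
    ext x
    simp [Finset.sum_apply, Set.indicator_apply]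
  rw [e, condExp_const hB] at h
  filter_upwards [h] with x hx
  rw [Finset.sum_apply] at hx
  exact hx.symm

lemma negMulLog_mem {x : ℝ} (hx : x ∈ Set.Icc (0 : ℝ) 1) :
    Real.negMulLog x ∈ Set.Icc (0 : ℝ) 1 :=
  ⟨Real.negMulLog_nonneg hx.1 hx.2, (Real.negMulLog_le_one_sub_self hx.1).trans (by linarith [hx.1])⟩

lemma integrable_negMulLog {g : X → ℝ} (hg : AEStronglyMeasurable g μ)
    (h : ∀ᵐ x ∂μ, g x ∈ Set.Icc (0 : ℝ) 1) : Integrable (fun x => Real.negMulLog (g x)) μ := by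
  refine Integrable.of_bound (C := 1)
    (Real.continuous_negMulLog.comp_aestronglyMeasurable hg) ?_
  filter_upwards [h] with x hx
  rw [Real.norm_eq_abs, abs_of_nonneg (negMulLog_mem hx).1]
  exact (negMulLog_mem hx).2

lemma integrable_negMulLog_condExp {A : Set X} (hA : MeasurableSet A) :
    Integrable (fun x => Real.negMulLog ((μ[A.indicator (fun _ => (1 : ℝ)) | B]) x)) μ :=
  integrable_negMulLog integrable_condExp.aestronglyMeasurable (condExp_ind_mem (B := B) hA)

lemma condInfo_nonneg {p : X → ι} (hp : MeasPart p) :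
    0 ≤ condInfo μ B p := by
  refine integral_nonneg_of_ae ?_
  filter_upwards [ae_all_iff.2 fun i => condExp_ind_mem (μ := μ) (B := B) (hp i)] with x hx
  exact Finset.sum_nonneg fun i _ => (negMulLog_mem (hx i)).1

/-- Conditional entropy decreases when the conditioning σ-algebra grows, by the conditional
Jensen inequality for the concave function `t ↦ -t log t`. -/
lemma condInfo_anti (hBB : B ≤ B') (hB' : B' ≤ mX)
    {p : X → ι} (hp : MeasPart p) : condInfo μ B' p ≤ condInfo μ B p := by
  have hB := hBB.trans hB'
  unfold condInfo
  rw [integral_finsetSum _ fun i _ => integrable_negMulLog_condExp (B := B') (hp i),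
    integral_finsetSum _ fun i _ => integrable_negMulLog_condExp (B := B) (hp i)]
  refine Finset.sum_le_sum fun i _ => ?_
  set u := (p ⁻¹' {i}).indicator (fun _ => (1 : ℝ))
  have hmem := condExp_ind_mem (μ := μ) (B := B') (hp i)
  have hJ := Real.concaveOn_negMulLog.condExp_map_le (μ := μ) (f := μ[u | B']) hB
    (Real.continuous_negMulLog.upperSemicontinuous.upperSemicontinuousOn _)
    (by filter_upwards [hmem] with x hx using hx.1) isClosed_Ici integrable_condExp
    (integrable_negMulLog_condExp (B := B') (hp i))
  have htower : μ[μ[u | B'] | B] =ᵐ[μ] μ[u | B] := condExp_condExp_of_le hBB hB'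
  rw [← integral_condExp hB (f := fun x => Real.negMulLog ((μ[u | B']) x))]
  refine integral_mono_ae integrable_condExp (integrable_negMulLog_condExp (B := B) (hp i)) ?_
  filter_upwards [hJ, htower] with x h1 h2
  simp only [Function.comp_def] at h1
  rw [h2] at h1
  exact h1

/-- Continuity of conditional entropy along increasing σ-algebras (Lévy's upward theorem). -/
lemma tendsto_condInfo (ℱ : Filtration ℕ mX) {p : X → ι} (hp : MeasPart p) :
    Tendsto (fun n => condInfo μ (ℱ n) p) atTop (nhds (condInfo μ (⨆ n, ℱ n) p)) := by
  refine tendsto_integral_of_dominated_convergence (fun _ => (Fintype.card ι : ℝ)) ?_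
    (integrable_const _) ?_ ?_
  · intro n
    exact (integrable_finsetSum _ fun i _ =>
      integrable_negMulLog_condExp (B := ℱ n) (hp i)).aestronglyMeasurable
  · intro n
    filter_upwards [ae_all_iff.2 fun i => condExp_ind_mem (μ := μ) (B := ℱ n) (hp i)] with x hx
    rw [Real.norm_eq_abs, abs_of_nonneg (Finset.sum_nonneg fun i _ => (negMulLog_mem (hx i)).1)]
    calc _ ≤ ∑ _i : ι, (1 : ℝ) := Finset.sum_le_sum fun i _ => (negMulLog_mem (hx i)).2
      _ = _ := by simp
  · filter_upwards [ae_all_iff.2 fun i => tendsto_ae_condExp (μ := μ) (ℱ := ℱ)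
      ((p ⁻¹' {i}).indicator (fun _ => (1 : ℝ)))] with x hx
    exact tendsto_finsetSum _ fun i _ => (Real.continuous_negMulLog.tendsto _).comp (hx i)

lemma condInfo_eq_zero {p : X → ι} (hp : MeasPart p) : condInfo μ mX p = 0 := by
  unfold condInfo
  have : ∀ i, μ[(p ⁻¹' {i}).indicator (fun _ => (1 : ℝ)) | mX]
      = (p ⁻¹' {i}).indicator (fun _ => (1 : ℝ)) := fun i =>
    condExp_of_stronglyMeasurable le_rfl
      (stronglyMeasurable_const.indicator (hp i)) (integrable_ind (hp i))
  simp_rw [this]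
  refine integral_eq_zero_of_ae (ae_of_all _ fun x => Finset.sum_eq_zero fun i _ => ?_)
  by_cases h : x ∈ p ⁻¹' {i} <;> simp [h]

/-- Conditioning an event on a finite partition averages it over each atom. On null atoms the
quotient takes the junk value `0`, which is harmless almost everywhere. -/
lemma condExp_sigmaPart {q : X → κ} (hq : MeasPart q) {A : Set X} (hA : MeasurableSet A) :
    (fun x => μ.real (A ∩ q ⁻¹' {q x}) / μ.real (q ⁻¹' {q x}))
      =ᵐ[μ] μ[A.indicator (fun _ => (1 : ℝ)) | sigmaPart q] := by
  classical
  set c : κ → ℝ := fun j => μ.real (A ∩ q ⁻¹' {j}) / μ.real (q ⁻¹' {j})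
  have hle := hq.sigmaPart_le
  have hcm : StronglyMeasurable[sigmaPart q] (fun x => c (q x)) := by
    refine Measurable.stronglyMeasurable (mα := sigmaPart q) ?_
    intro s _
    exact ⟨c ⁻¹' s, trivial, rfl⟩
  have hsum : ∀ x, c (q x) = ∑ j, (q ⁻¹' {j}).indicator (fun _ => c j) x := by
    intro x
    simp [Set.indicator_apply]
  have hint : Integrable (fun x => c (q x)) μ := by
    simp_rw [hsum]
    exact integrable_finsetSum _ fun j _ => (integrable_const _).indicator (hq j)
  refine ae_eq_condExp_of_forall_setIntegral_eq hle (integrable_ind hA)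
    (fun s _ _ => hint.integrableOn) ?_ hcm.aestronglyMeasurable
  rintro _ ⟨s, -, rfl⟩ -
  have hms := hq.preimage s
  rw [integral_indicator hA, Measure.restrict_restrict hA]
  simp only [integral_const, smul_eq_mul, mul_one]
  change ∫ x in q ⁻¹' s, c (q x) ∂μ = _
  simp_rw [hsum]
  rw [integral_finsetSum _ fun j _ => (integrable_const _).indicator (hq j)]
  have e1 : ∀ j, ∫ x in q ⁻¹' s, (q ⁻¹' {j}).indicator (fun _ => c j) x ∂μ
      = if j ∈ s then μ.real (A ∩ q ⁻¹' {j}) else 0 := by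
    intro j
    rw [integral_indicator (hq j), Measure.restrict_restrict (hq j)]
    simp only [integral_const, smul_eq_mul]
    split_ifs with hj
    · have : q ⁻¹' {j} ∩ q ⁻¹' s = q ⁻¹' {j} := by
        apply Set.inter_eq_left.2
        rintro x rfl
        exact hj
      rw [this]
      simp only [measureReal_restrict_apply_univ, c]
      by_cases h0 : μ.real (q ⁻¹' {j}) = 0
      · have : μ.real (A ∩ q ⁻¹' {j}) = 0 :=
          le_antisymm (h0 ▸ measureReal_mono Set.inter_subset_right) measureReal_nonneg
        simp [this]
      · field_simp
    · have : q ⁻¹' {j} ∩ q ⁻¹' s = ∅ := by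
        ext x
        simp only [Set.mem_inter_iff, Set.mem_preimage, Set.mem_singleton_iff,
          Set.mem_empty_iff_false, iff_false, not_and]
        rintro rfl
        exact hj
      simp [this]
  simp_rw [e1]
  rw [measureReal_restrict_apply_univ]
  have e2 : A ∩ q ⁻¹' s = ⋃ j ∈ Finset.univ.filter (· ∈ s), A ∩ q ⁻¹' {j} := by
    ext x
    simp
  rw [e2, measureReal_biUnion_finset, Finset.sum_filter]
  · intro i _ j _ hij
    refine Set.disjoint_left.2 ?_
    rintro x ⟨_, rfl⟩ ⟨_, h⟩
    exact hij h
  · exact fun j _ => hA.inter (hq j)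

/-- Chain rule: `H(p | q) = H(p ∨ q) - H(q)` for finite partitions. -/
lemma condInfo_sigmaPart {p : X → ι} {q : X → κ} (hp : MeasPart p) (hq : MeasPart q) :
    condInfo μ (sigmaPart q) p = partInfo μ (fun x => (p x, q x)) - partInfo μ q := by
  classical
  set c : ι → κ → ℝ := fun i j => μ.real (p ⁻¹' {i} ∩ q ⁻¹' {j}) / μ.real (q ⁻¹' {j})
  have h1 : condInfo μ (sigmaPart q) p = ∫ x, ∑ i, Real.negMulLog (c i (q x)) ∂μ := by
    refine integral_congr_ae ?_
    filter_upwards [ae_all_iff.2 fun i => condExp_sigmaPart (μ := μ) hq (hp i)] with x hx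
    exact Finset.sum_congr rfl fun i _ => by rw [← hx i]
  have h2 : ∀ x, ∑ i, Real.negMulLog (c i (q x))
      = ∑ j, (q ⁻¹' {j}).indicator (fun _ => ∑ i, Real.negMulLog (c i j)) x := by
    intro x
    simp [Set.indicator_apply]
  have h3 : condInfo μ (sigmaPart q) p
      = ∑ j, μ.real (q ⁻¹' {j}) * ∑ i, Real.negMulLog (c i j) := by
    rw [h1]
    simp_rw [h2]
    rw [integral_finsetSum _ fun j _ => (integrable_const _).indicator (hq j)]
    refine Finset.sum_congr rfl fun j _ => ?_
    rw [integral_indicator (hq j)]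
    simp
  have hpre : ∀ i j, (fun x => (p x, q x)) ⁻¹' {(i, j)} = p ⁻¹' {i} ∩ q ⁻¹' {j} := by
    intro i j
    ext x
    simp
  have hmarg : ∀ j, ∑ i, μ.real (p ⁻¹' {i} ∩ q ⁻¹' {j}) = μ.real (q ⁻¹' {j}) := by
    intro j
    rw [← measureReal_biUnion_finset]
    · congr 1
      ext x
      simp
    · intro i _ i' _ hii
      refine Set.disjoint_left.2 ?_
      rintro x ⟨rfl, _⟩ ⟨h, _⟩
      exact hii h
    · exact fun i _ => (hp i).inter (hq j)
  rw [h3, partInfo, partInfo, Fintype.sum_prod_type_right, ← Finset.sum_sub_distrib]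
  refine Finset.sum_congr rfl fun j _ => ?_
  simp only [hpre]
  change _ = ∑ i, Real.negMulLog (μ.real _) - Real.negMulLog (μ.real _)
  by_cases h0 : μ.real (q ⁻¹' {j}) = 0
  · have : ∀ i, μ.real (p ⁻¹' {i} ∩ q ⁻¹' {j}) = 0 := fun i =>
      le_antisymm (h0 ▸ measureReal_mono Set.inter_subset_right) measureReal_nonneg
    simp [h0, this]
  · have e : ∀ i, μ.real (p ⁻¹' {i} ∩ q ⁻¹' {j}) = c i j * μ.real (q ⁻¹' {j}) := fun i => by
      simp only [c]
      field_simp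
    have hc : ∑ i, c i j = 1 := by
      have := hmarg j
      simp_rw [e] at this
      rw [← Finset.sum_mul] at this
      exact mul_right_cancel₀ h0 (by linarith)
    simp_rw [e, Real.negMulLog_mul]
    rw [Finset.sum_add_distrib, ← Finset.mul_sum, ← Finset.sum_mul, hc]
    ring

end CondInfo


/-! ### Entropy of finite partitions -/

section PartInfo

set_option linter.unusedSectionVars false

variable {B B' : MeasurableSpace X} {mX : MeasurableSpace X} {μ : Measure X}
  [IsProbabilityMeasure μ]
  {ι κ τ : Type} [Fintype ι] [Fintype κ] [Fintype τ]

lemma partInfo_comp_injective (p : X → ι) {e : ι → κ} (he : Function.Injective e) :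
    partInfo μ (fun x => e (p x)) = partInfo μ p := by
  classical
  unfold partInfo
  rw [← Finset.sum_subset (Finset.subset_univ (Finset.univ.image e)),
    Finset.sum_image he.injOn]
  · refine Finset.sum_congr rfl fun i _ => ?_
    congr 3
    ext x
    simp [he.eq_iff]
  · intro k _ hk
    have : (fun x => e (p x)) ⁻¹' {k} = ∅ := by
      ext x
      simp only [Set.mem_preimage, Set.mem_singleton_iff, Set.mem_empty_iff_false, iff_false]
      rintro rfl
      exact hk (by simp)
    simp [this]

/-- The entropy depends only on the equivalence relation defining the partition, not on the
labels of its atoms. -/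
lemma partInfo_congr {p : X → ι} {q : X → κ} (h : ∀ x y, p x = p y ↔ q x = q y) :
    partInfo μ p = partInfo μ q := by
  classical
  have : partInfo μ (fun x => (p x, q x)) = partInfo μ p := by
    let e : Set.range p → ι × κ := fun i => (i.1, q i.2.choose)
    have he : Function.Injective e := fun i j hij => Subtype.ext (Prod.ext_iff.1 hij).1
    refine Eq.trans ?_ ((partInfo_comp_injective (Set.rangeFactorization p) he).trans
      (partInfo_comp_injective (Set.rangeFactorization p) Subtype.val_injective).symm)
    congr 1
    ext x
    · rfl
    · have hx : p (Set.rangeFactorization p x).2.choose = p x :=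
        (Set.rangeFactorization p x).2.choose_spec
      exact ((h _ _).1 hx).symm
  have h' : partInfo μ (fun x => (p x, q x)) = partInfo μ q := by
    let e : Set.range q → ι × κ := fun i => (p i.2.choose, i.1)
    have he : Function.Injective e := fun i j hij => Subtype.ext (Prod.ext_iff.1 hij).2
    refine Eq.trans ?_ ((partInfo_comp_injective (Set.rangeFactorization q) he).trans
      (partInfo_comp_injective (Set.rangeFactorization q) Subtype.val_injective).symm)
    congr 1
    ext x
    · have hx : q (Set.rangeFactorization q x).2.choose = q x :=
        (Set.rangeFactorization q x).2.choose_spec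
      exact ((h _ _).2 hx).symm
    · rfl
  rw [← this, h']

lemma partInfo_nonneg (p : X → ι) : 0 ≤ partInfo μ p :=
  Finset.sum_nonneg fun _ _ => Real.negMulLog_nonneg measureReal_nonneg measureReal_le_one

lemma partInfo_subsingleton [Subsingleton ι] (p : X → ι) : partInfo μ p = 0 := by
  refine Finset.sum_eq_zero fun i _ => ?_
  have : p ⁻¹' {i} = Set.univ := by
    ext x
    simpa using Subsingleton.elim _ _
  simp [this]

lemma partInfo_comp_preserving {Y : Type*} {mY : MeasurableSpace Y} {ν : Measure Y} {g : Y → X}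
    (hg : MeasurePreserving g ν μ) {p : X → ι} (hp : MeasPart p) :
    partInfo ν (fun y => p (g y)) = partInfo μ p := by
  refine Finset.sum_congr rfl fun i _ => ?_
  rw [← hg.measure_preimage (hp i).nullMeasurableSet]
  rfl

/-- Submodularity of entropy: conditioning on a finer finite partition decreases entropy. -/
lemma partInfo_submodular {p : X → ι} {q : X → κ} {r : X → τ} (hp : MeasPart p)
    (hq : MeasPart q) (hr : MeasPart r) (g : κ → τ) (h : ∀ x, r x = g (q x)) :
    partInfo μ (fun x => (p x, q x)) - partInfo μ q
      ≤ partInfo μ (fun x => (p x, r x)) - partInfo μ r := by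
  rw [← condInfo_sigmaPart hp hq, ← condInfo_sigmaPart hp hr]
  exact condInfo_anti (sigmaPart_mono g h) hq.sigmaPart_le hp

lemma partInfo_pair_le {p : X → ι} {q : X → κ} (hp : MeasPart p) (hq : MeasPart q) :
    partInfo μ (fun x => (p x, q x)) ≤ partInfo μ p + partInfo μ q := by
  have hr : MeasPart (fun _ : X => ()) := fun i => MeasurableSet.const _
  have h := partInfo_submodular (μ := μ) hp hq hr (fun _ => ()) (fun _ => rfl)
  rw [partInfo_subsingleton (fun _ : X => ()),
    partInfo_congr (p := fun x => (p x, ())) (q := p) (by simp)] at h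
  linarith

lemma partInfo_le_pair {p : X → ι} {q : X → κ} (hp : MeasPart p) (hq : MeasPart q) :
    partInfo μ q ≤ partInfo μ (fun x => (p x, q x)) := by
  have := condInfo_nonneg (μ := μ) (B := sigmaPart q) hp
  rw [condInfo_sigmaPart hp hq] at this
  linarith

lemma refinePart_eq_iff {f : X → X} {p : X → ι} {n : ℕ} {x y : X} :
    refinePart f p n x = refinePart f p n y ↔ ∀ k < n, p (f^[k] x) = p (f^[k] y) := by
  simp only [refinePart, funext_iff]
  exact ⟨fun h k hk => h ⟨k, hk⟩, fun h k => h k k.2⟩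

/-- The refinement over `m + n` steps is the join of the refinement over the first `m` steps
and that over the next `n` steps. -/
lemma partInfo_refine_add (f : X → X) (p : X → ι) (m n : ℕ) :
    partInfo μ (refinePart f p (m + n))
      = partInfo μ (fun x => (refinePart f p m x, refinePart f p n (f^[m] x))) := by
  refine partInfo_congr fun x y => ?_
  simp only [Prod.mk.injEq, refinePart_eq_iff, ← Function.iterate_add_apply]
  constructor
  · exact fun h => ⟨fun k hk => h k (by omega), fun k hk => h (k + m) (by omega)⟩
  · rintro ⟨h1, h2⟩ k hk
    by_cases hkm : k < m
    · exact h1 k hkm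
    · have := h2 (k - m) (by omega)
      rwa [Nat.sub_add_cancel (by omega)] at this

lemma subadditive_partInfo {f : X → X} (hf : MeasurePreserving f μ μ) {p : X → ι}
    (hp : MeasPart p) : Subadditive fun n => partInfo μ (refinePart f p n) := by
  intro m n
  simp only
  rw [partInfo_refine_add]
  have h := hp.refine hf.measurable n
  refine (partInfo_pair_le (hp.refine hf.measurable m)
    (h.comp_meas (hf.measurable.iterate m))).trans_eq ?_
  rw [partInfo_comp_preserving (hf.iterate m) h]

lemma bddBelow_partInfo_div (f : X → X) (p : X → ι) :
    BddBelow (Set.range fun n : ℕ => partInfo μ (refinePart f p n) / n) :=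
  ⟨0, by rintro _ ⟨n, rfl⟩; exact div_nonneg (partInfo_nonneg _) n.cast_nonneg⟩

lemma entropyOfPart_le (f : X → X) (p : X → ι) {n : ℕ} (hn : 1 ≤ n) :
    entropyOfPart μ f p ≤ partInfo μ (refinePart f p n) / n := by
  obtain ⟨k, rfl⟩ := Nat.exists_eq_add_of_le' hn
  have := ciInf_le (f := fun n : ℕ => partInfo μ (refinePart f p (n + 1)) / ((n : ℝ) + 1))
    ⟨0, by rintro _ ⟨n, rfl⟩; exact div_nonneg (partInfo_nonneg _) (by positivity)⟩ k
  simpa [entropyOfPart] using this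

lemma le_entropyOfPart {f : X → X} {p : X → ι} {c : ℝ}
    (h : ∀ n : ℕ, 1 ≤ n → n * c ≤ partInfo μ (refinePart f p n)) : c ≤ entropyOfPart μ f p := by
  refine le_ciInf fun n => ?_
  rw [le_div_iff₀ (by positivity), mul_comm]
  simpa using h (n + 1) (by omega)

lemma mul_entropyOfPart_le (f : X → X) (p : X → ι) (n : ℕ) :
    n * entropyOfPart μ f p ≤ partInfo μ (refinePart f p n) := by
  rcases Nat.eq_zero_or_pos n with rfl | hn
  · simpa using partInfo_nonneg _
  · have := entropyOfPart_le (μ := μ) f p hn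
    rwa [le_div_iff₀ (by exact_mod_cast hn), mul_comm] at this

/-- Fekete's lemma: the infimum defining the entropy of a partition is a limit. -/
lemma tendsto_entropyOfPart {f : X → X} (hf : MeasurePreserving f μ μ) {p : X → ι}
    (hp : MeasPart p) :
    Tendsto (fun n : ℕ => partInfo μ (refinePart f p n) / n) atTop
      (nhds (entropyOfPart μ f p)) := by
  have hs := subadditive_partInfo hf hp
  have hlim := hs.tendsto_lim (bddBelow_partInfo_div f p)
  convert hlim using 2
  apply le_antisymm
  · refine ge_of_tendsto hlim ?_
    filter_upwards [eventually_ge_atTop 1] with n hn using entropyOfPart_le f p hn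
  · refine le_ciInf fun n => ?_
    have := hs.lim_le_div (bddBelow_partInfo_div f p) (n := n + 1) (by omega)
    simpa using this

/-- `n` symbols carry at least `n h` of entropy even when the whole future from time `n` on
is known. -/
lemma mul_entropyOfPart_le_condInfo {f : X → X} (hf : MeasurePreserving f μ μ) {p : X → ι}
    (hp : MeasPart p) (n : ℕ)
    (hT : B ≤ ⨆ i : ℕ, sigmaPart (fun x => p (f^[n + i] x))) :
    n * entropyOfPart μ f p ≤ condInfo μ B (refinePart f p n) := by
  set a : ℕ → ℝ := fun m => partInfo μ (refinePart f p m)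
  have hq : ∀ m, MeasPart (fun x => refinePart f p m (f^[n] x)) := fun m =>
    (hp.refine hf.measurable m).comp_meas (hf.measurable.iterate n)
  let ℱ : Filtration ℕ mX :=
    { seq := fun m => sigmaPart (fun x => refinePart f p m (f^[n] x))
      mono' := fun m m' h =>
        sigmaPart_mono (fun c k => c (Fin.castLE h k)) (fun x => rfl)
      le' := fun m => (hq m).sigmaPart_le }
  have hsup : B ≤ ⨆ m, ℱ m := by
    refine hT.trans (iSup_le fun i => le_iSup_of_le (i + 1) ?_)
    refine sigmaPart_mono (fun c => c (Fin.last i)) fun x => ?_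
    simp [refinePart, ← Function.iterate_add_apply, add_comm]
  have hξ := hp.refine hf.measurable n
  have hlim := tendsto_condInfo (μ := μ) ℱ hξ
  have hval : ∀ m, condInfo μ (ℱ m) (refinePart f p n) = a (n + m) - a m := by
    intro m
    have := condInfo_sigmaPart (μ := μ) hξ (hq m)
    rw [← partInfo_refine_add, partInfo_comp_preserving (hf.iterate n)
      (hp.refine hf.measurable m)] at this
    exact this
  have hle : condInfo μ (⨆ m, ℱ m) (refinePart f p n) ≤ condInfo μ B (refinePart f p n) :=
    condInfo_anti hsup (iSup_le fun m => ℱ.le m) hξ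
  refine le_trans ?_ hle
  rcases Nat.eq_zero_or_pos n with rfl | hn
  · simpa using condInfo_nonneg hξ
  -- Cesàro averages of the increments along multiples of `n` telescope.
  have hces := (hlim.comp (tendsto_id.atTop_mul_const' hn)).cesaro
  refine ge_of_tendsto hces ?_
  filter_upwards [eventually_ge_atTop 1] with N hN
  have hN' : (0 : ℝ) < N := by exact_mod_cast hN
  have htel : ∑ i ∈ Finset.range N, condInfo μ (ℱ (i * n)) (refinePart f p n)
      = a (N * n) - a 0 := by
    have hsub := Finset.sum_range_sub (fun i => a (i * n)) N
    simp only [zero_mul] at hsub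
    rw [← hsub]
    refine Finset.sum_congr rfl fun i _ => ?_
    rw [hval, show n + i * n = (i + 1) * n by ring]
  have h0 : a 0 = 0 := partInfo_subsingleton _
  simp only [Function.comp_def, id]
  rw [htel, h0, sub_zero, inv_mul_eq_div, le_div_iff₀ hN']
  have := mul_entropyOfPart_le (μ := μ) f p (N * n)
  push_cast at this
  linarith

/-- The inequality behind the Kolmogorov–Sinai theorem. Knowing the `b`-name on a window of
radius `k` leaves conditional entropy `d` for one symbol of `p`, so `n` symbols of `p` cost at
most the entropy of the `b`-name of length `n + 2 * k`, plus `n d`; the generating property says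
that `d → 0` as `k → ∞`. -/
lemma entropyOfPart_le_of_generator {f finv : X → X} (hf : MeasurePreserving f μ μ)
    (hfinv : Measurable finv) (hleft : Function.LeftInverse finv f)
    (hright : Function.RightInverse finv f) {b : X → κ} (hb : MeasPart b)
    (hgen : mX ≤ ⨆ k : ℕ, sigmaPart (fun x => refinePart f b (2 * k + 1) (finv^[k] x)))
    {p : X → ι} (hp : MeasPart p) : entropyOfPart μ f p ≤ entropyOfPart μ f b := by
  have hinv : MeasurePreserving finv μ μ := by
    refine ⟨hfinv, ?_⟩
    conv_lhs => rw [← hf.map_eq]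
    rw [Measure.map_map hfinv hf.measurable, hleft.comp_eq_id, Measure.map_id]
  have hfm := hf.measurable
  have hq : ∀ n k, MeasPart (fun x => refinePart f b n (finv^[k] x)) := fun n k =>
    (hb.refine hfm n).comp_meas (hfinv.iterate k)
  let ℱ : Filtration ℕ mX :=
    { seq := fun k => sigmaPart (fun x => refinePart f b (2 * k + 1) (finv^[k] x))
      mono' := monotone_nat_of_le_succ fun k => by
        refine sigmaPart_mono
          (fun c (i : Fin (2 * k + 1)) => c ⟨i + 1, by omega⟩) fun x => ?_
        funext i
        simp only [refinePart]
        rw [Function.iterate_succ_apply, Function.iterate_succ_apply', hright]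
      le' := fun k => (hq _ k).sigmaPart_le }
  have hsup : (⨆ k, ℱ k) = mX := le_antisymm (iSup_le fun k => ℱ.le k) hgen
  have hlim := tendsto_condInfo (μ := μ) ℱ hp
  rw [hsup, condInfo_eq_zero hp] at hlim
  refine ge_of_tendsto' (by simpa using hlim.const_add (entropyOfPart μ f b)) fun k => ?_
  set d := condInfo μ (ℱ k) p
  have hd : d = partInfo μ (fun x => (p x, refinePart f b (2 * k + 1) (finv^[k] x)))
      - partInfo μ (fun x => refinePart f b (2 * k + 1) (finv^[k] x)) :=
    condInfo_sigmaPart hp (hq _ k)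
  have hcomm : Function.Commute finv f := fun x => by rw [hleft, hright]
  -- each new symbol of `p` costs at most `d` once the `b`-name on a long window is known
  have key : ∀ n N, n ≤ N →
      partInfo μ (fun x => (refinePart f p n x, refinePart f b (N + 2 * k) (finv^[k] x)))
      ≤ partInfo μ (refinePart f b (N + 2 * k)) + n * d := by
    intro n N
    induction n with
    | zero =>
      intro _
      rw [partInfo_congr (q := fun x => refinePart f b (N + 2 * k) (finv^[k] x))
        (by intro x y; simp [Subsingleton.elim (refinePart f p 0 x) (refinePart f p 0 y)]),
        partInfo_comp_preserving (hinv.iterate k) (hb.refine hfm _)]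
      simp
    | succ n ih =>
      intro hn
      have ih := ih (by omega)
      have hpn : MeasPart (fun x => p (f^[n] x)) := hp.comp_meas (hfm.iterate n)
      have hQ := (hp.refine hfm n).pair (hq (N + 2 * k) k)
      have hR : MeasPart (fun x => refinePart f b (2 * k + 1) (finv^[k] (f^[n] x))) :=
        (hq (2 * k + 1) k).comp_meas (hfm.iterate n)
      have hsub := partInfo_submodular (μ := μ) hpn hQ hR
        (fun c i => c.2 ⟨i + n, by omega⟩) (fun x => by
          funext i
          simp only [refinePart]
          rw [(hcomm.iterate_iterate k n).eq, ← Function.iterate_add_apply])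
      have e1 := partInfo_comp_preserving (hf.iterate n) (hp.pair (hq (2 * k + 1) k))
      have e2 := partInfo_comp_preserving (hf.iterate n) (hq (2 * k + 1) k)
      rw [e1, e2, ← hd] at hsub
      have e3 : partInfo μ (fun x => (refinePart f p (n + 1) x,
            refinePart f b (N + 2 * k) (finv^[k] x)))
          = partInfo μ (fun x => (p (f^[n] x), (refinePart f p n x,
            refinePart f b (N + 2 * k) (finv^[k] x)))) := by
        refine partInfo_congr fun x y => ?_
        simp only [Prod.mk.injEq, refinePart_eq_iff, Nat.forall_lt_succ_right]
        tauto
      rw [e3]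
      push_cast
      linarith
  have hn : ∀ n : ℕ, 1 ≤ n → entropyOfPart μ f p
      ≤ partInfo μ (refinePart f b (n + 2 * k)) / (n + 2 * k : ℕ) * ((n + 2 * k : ℕ) / n) + d := by
    intro n hn
    have hn' : (0 : ℝ) < n := by exact_mod_cast hn
    have h1 := mul_entropyOfPart_le (μ := μ) f p n
    have h2 := partInfo_le_pair (μ := μ) (hq (n + 2 * k) k) (hp.refine hfm n)
    rw [partInfo_congr (p := fun x => (refinePart f b (n + 2 * k) (finv^[k] x),
      refinePart f p n x)) (q := fun x => (refinePart f p n x,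
      refinePart f b (n + 2 * k) (finv^[k] x))) (by intro x y; simp [and_comm])] at h2
    have h3 := key n n le_rfl
    have hnk : ((n + 2 * k : ℕ) : ℝ) ≠ 0 := by positivity
    rw [div_mul_div_cancel₀ hnk, ← sub_le_iff_le_add, le_div_iff₀ hn']
    linarith
  have hratio : Tendsto (fun n : ℕ => ((n + 2 * k : ℕ) : ℝ) / n) atTop (nhds 1) := by
    have : Tendsto (fun n : ℕ => 1 + (2 * k : ℝ) / n) atTop (nhds (1 + 0)) :=
      (tendsto_const_div_atTop_nhds_zero_nat _).const_add 1
    rw [add_zero] at this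
    refine this.congr' ?_
    filter_upwards [eventually_ge_atTop 1] with n hn
    have hn' : (n : ℝ) ≠ 0 := by positivity
    push_cast
    field_simp
  have hfin := (((tendsto_entropyOfPart hf hb).comp (tendsto_add_atTop_nat (2 * k))).mul
    hratio).add_const d
  rw [mul_one] at hfin
  refine ge_of_tendsto hfin ?_
  filter_upwards [eventually_ge_atTop 1] with n hn1 using hn n hn1

/-- The Kolmogorov–Sinai theorem for a two-sided generator of an invertible system. -/
lemma entropyKS_eq_of_generator {f finv : X → X} (hf : MeasurePreserving f μ μ)
    (hfinv : Measurable finv) (hleft : Function.LeftInverse finv f)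
    (hright : Function.RightInverse finv f) {b : X → κ} (hb : MeasPart b)
    (hgen : mX ≤ ⨆ k : ℕ, sigmaPart (fun x => refinePart f b (2 * k + 1) (finv^[k] x))) :
    entropyKS μ f = entropyOfPart μ f b := by
  refine IsGreatest.csSup_eq ⟨?_, ?_⟩
  · let e := Fintype.equivFin κ
    refine ⟨Fintype.card κ, fun x => e (b x), fun i => ?_, ?_⟩
    · convert hb (e.symm i) using 1
      ext x
      simp [Equiv.eq_symm_apply]
    · unfold entropyOfPart
      congr! 2 with n
      congr 1
      refine partInfo_congr fun x y => ?_
      simp [refinePart_eq_iff]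
  · rintro _ ⟨m, p, hp, rfl⟩
    exact entropyOfPart_le_of_generator hf hfinv hleft hright hb hgen hp

end PartInfo


/-! ### Relatively independent self-joinings -/

/-- `ν` is the relatively independent self-joining of `μ` over the σ-algebra `B`, described by
its values on rectangles: `ν (A × A') = ∫ E[1_A | B] E[1_A' | B] dμ`. -/
def IsCondJoining (B : MeasurableSpace X) {mX : MeasurableSpace X} (μ : Measure X)
    (ν : Measure (X × X)) : Prop :=
  ∀ A A' : Set X, MeasurableSet A → MeasurableSet A' →
    ν.real (A ×ˢ A') = ∫ x, (μ[A.indicator (fun _ => (1 : ℝ)) | B]) x *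
      (μ[A'.indicator (fun _ => (1 : ℝ)) | B]) x ∂μ

section Joining

set_option linter.unusedSectionVars false

variable {B : MeasurableSpace X} {mX : MeasurableSpace X} {μ : Measure X}
  [IsProbabilityMeasure μ] {ν : Measure (X × X)} [IsProbabilityMeasure ν]
  {ι : Type} [Fintype ι]

lemma integral_condExp_ind (hB : B ≤ mX) {A : Set X} (hA : MeasurableSet A) :
    ∫ x, (μ[A.indicator (fun _ => (1 : ℝ)) | B]) x ∂μ = μ.real A := by
  rw [integral_condExp hB, integral_indicator hA]
  simp

lemma condExp_ind_univ (hB : B ≤ mX) :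
    μ[(Set.univ : Set X).indicator (fun _ => (1 : ℝ)) | B] = fun _ => 1 := by
  rw [Set.indicator_univ, condExp_const hB]

lemma IsCondJoining.fst (h : IsCondJoining B μ ν) (hB : B ≤ mX) :
    MeasurePreserving (Prod.fst : X × X → X) ν μ := by
  refine ⟨measurable_fst, ?_⟩
  ext A hA
  rw [Measure.map_apply measurable_fst hA, ← Set.prod_univ]
  have := h A Set.univ hA MeasurableSet.univ
  rw [condExp_ind_univ hB] at this
  simp only [mul_one] at this
  rw [integral_condExp_ind hB hA] at this
  exact (measureReal_eq_measureReal_iff).1 this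

lemma IsCondJoining.snd (h : IsCondJoining B μ ν) (hB : B ≤ mX) :
    MeasurePreserving (Prod.snd : X × X → X) ν μ := by
  refine ⟨measurable_snd, ?_⟩
  ext A hA
  rw [Measure.map_apply measurable_snd hA, ← Set.univ_prod]
  have := h Set.univ A MeasurableSet.univ hA
  rw [condExp_ind_univ hB] at this
  simp only [one_mul] at this
  rw [integral_condExp_ind hB hA] at this
  exact (measureReal_eq_measureReal_iff).1 this

lemma isCondJoining_bot : IsCondJoining ⊥ μ (μ.prod μ) := by
  intro A A' hA hA'
  rw [condExp_bot, condExp_bot, integral_indicator hA, integral_indicator hA']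
  simp [measureReal_prod_prod]

/-- The joining is built from the disintegration `μ_x` of `μ` over `B`, as `∫ μ_x × μ_x dμ(x)`. -/
lemma exists_isCondJoining [StandardBorelSpace X] (hB : B ≤ mX) :
    ∃ ν : Measure (X × X), IsProbabilityMeasure ν ∧ IsCondJoining B μ ν := by
  let k : ProbabilityTheory.Kernel X X :=
    (ProbabilityTheory.condExpKernel μ B).comap id (measurable_id'' hB)
  have hk : ProbabilityTheory.IsMarkovKernel k := inferInstance
  refine ⟨μ.bind (ProbabilityTheory.Kernel.prod k k), inferInstance, fun A A' hA hA' => ?_⟩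
  rw [measureReal_def, Measure.bind_apply (hA.prod hA')
    (ProbabilityTheory.Kernel.aemeasurable _)]
  simp_rw [ProbabilityTheory.Kernel.prod_apply, Measure.prod_prod]
  rw [← integral_toReal]
  · refine integral_congr_ae ?_
    filter_upwards [ProbabilityTheory.condExpKernel_ae_eq_condExp (μ := μ) hB hA,
      ProbabilityTheory.condExpKernel_ae_eq_condExp (μ := μ) hB hA'] with x h1 h2
    rw [ENNReal.toReal_mul]
    exact congrArg₂ (· * ·) h1 h2
  · exact ((k.measurable_coe hA).mul (k.measurable_coe hA')).aemeasurable
  · exact ae_of_all _ fun x => ENNReal.mul_lt_top (measure_lt_top _ _) (measure_lt_top _ _)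

/-- Conditional expectation over an invariant σ-algebra commutes with the dynamics. -/
lemma condExp_preimage {f finv : X → X} (hf : MeasurePreserving f μ μ)
    (hleft : Function.LeftInverse finv f)
    (hB : B ≤ mX)
    (h1 : ∀ s, MeasurableSet[B] s → MeasurableSet[B] (f ⁻¹' s))
    (h2 : ∀ s, MeasurableSet[B] s → MeasurableSet[B] (finv ⁻¹' s))
    {A : Set X} (hA : MeasurableSet A) :
    (fun x => (μ[A.indicator (fun _ => (1 : ℝ)) | B]) (f x))
      =ᵐ[μ] μ[(f ⁻¹' A).indicator (fun _ => (1 : ℝ)) | B] := by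
  set g := μ[A.indicator (fun _ => (1 : ℝ)) | B]
  have hg : StronglyMeasurable[B] g := stronglyMeasurable_condExp
  have hgint : Integrable g μ := integrable_condExp
  have hint : Integrable (fun x => g (f x)) μ := hf.integrable_comp_of_integrable hgint
  have hfB : Measurable[B, B] f := fun s hs => h1 s hs
  refine ae_eq_condExp_of_forall_setIntegral_eq hB (integrable_ind (hf.measurable hA))
    (fun s _ _ => hint.integrableOn) ?_ (hg.comp_measurable hfB).aestronglyMeasurable
  intro s hs _
  have hs' := h2 s hs
  have hsf : s = f ⁻¹' (finv ⁻¹' s) := by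
    rw [← Set.preimage_comp, hleft.comp_eq_id, Set.preimage_id]
  rw [integral_indicator (hf.measurable hA), Measure.restrict_restrict (hf.measurable hA)]
  have e : f ⁻¹' A ∩ s = f ⁻¹' (A ∩ finv ⁻¹' s) := by rw [Set.preimage_inter, ← hsf]
  have e1 : ∫ x in s, g (f x) ∂μ = ∫ x in finv ⁻¹' s, g x ∂μ := by
    conv_lhs => rw [hsf]
    have h3 := setIntegral_map (μ := μ) (hB _ hs') (f := g) (g := f)
      (by rw [hf.map_eq]; exact hgint.aestronglyMeasurable) hf.measurable.aemeasurable
    rw [hf.map_eq] at h3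
    exact h3.symm
  rw [e1, setIntegral_condExp hB (integrable_ind hA) hs', integral_indicator hA,
    Measure.restrict_restrict hA, e]
  simp only [integral_const, smul_eq_mul, mul_one, measureReal_restrict_apply_univ]
  rw [measureReal_def, measureReal_def,
    hf.measure_preimage (hA.inter (hB _ hs')).nullMeasurableSet]

/-- The joining over a σ-algebra invariant under `f` and its inverse is invariant under `f × f`. -/
lemma IsCondJoining.measurePreserving (h : IsCondJoining B μ ν)
    {f finv : X → X} (hf : MeasurePreserving f μ μ)
    (hleft : Function.LeftInverse finv f)
    (hB : B ≤ mX)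
    (h1 : ∀ s, MeasurableSet[B] s → MeasurableSet[B] (f ⁻¹' s))
    (h2 : ∀ s, MeasurableSet[B] s → MeasurableSet[B] (finv ⁻¹' s)) :
    MeasurePreserving (Prod.map f f) ν ν := by
  have hm : Measurable (Prod.map f f) := hf.measurable.prodMap hf.measurable
  refine ⟨hm, ?_⟩
  have : IsProbabilityMeasure (ν.map (Prod.map f f)) :=
    Measure.isProbabilityMeasure_map hm.aemeasurable
  refine Measure.ext_prod fun {s t} hs ht => ?_
  rw [Measure.map_apply hm (hs.prod ht)]
  change ν ((f ⁻¹' s) ×ˢ (f ⁻¹' t)) = _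
  refine (measureReal_eq_measureReal_iff).1 ?_
  rw [h _ _ (hf.measurable hs) (hf.measurable ht), h _ _ hs ht]
  have e1 := condExp_preimage hf hleft hB h1 h2 hs
  have e2 := condExp_preimage hf hleft hB h1 h2 ht
  calc _ = ∫ x, (μ[s.indicator (fun _ => (1 : ℝ)) | B]) (f x) *
      (μ[t.indicator (fun _ => (1 : ℝ)) | B]) (f x) ∂μ := by
        refine integral_congr_ae ?_
        filter_upwards [e1, e2] with x a b
        rw [a, b]
    _ = _ := by
        have h3 := integral_map (μ := μ) hf.measurable.aemeasurable
          (f := fun x => (μ[s.indicator (fun _ => (1 : ℝ)) | B]) x *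
            (μ[t.indicator (fun _ => (1 : ℝ)) | B]) x)
          (by
            rw [hf.map_eq]
            exact (integrable_condExp.aestronglyMeasurable).mul
              integrable_condExp.aestronglyMeasurable)
        rw [hf.map_eq] at h3
        exact h3.symm

/-- If the joining is the product measure then the σ-algebra is trivial: for `A ∈ B` the joining
gives `A × A` the mass `μ A`, while the product gives it `(μ A)²`. -/
lemma measure_zero_or_one_of_isCondJoining_prod (h : IsCondJoining B μ (μ.prod μ))
    (hB : B ≤ mX) {A : Set X} (hA : MeasurableSet[B] A) : μ A = 0 ∨ μ A = 1 := by
  have hA' := hB _ hA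
  have := h A A hA' hA'
  have hsm : StronglyMeasurable[B] (A.indicator (fun _ => (1 : ℝ))) :=
    stronglyMeasurable_const.indicator hA
  rw [condExp_of_stronglyMeasurable hB hsm (integrable_ind hA')] at this
  have e : ∀ x, A.indicator (fun _ => (1 : ℝ)) x * A.indicator (fun _ => (1 : ℝ)) x
      = A.indicator (fun _ => (1 : ℝ)) x := by
    intro x
    by_cases hx : x ∈ A <;> simp [hx]
  simp_rw [e] at this
  rw [integral_indicator hA', measureReal_prod_prod] at this
  simp only [integral_const, smul_eq_mul, mul_one, measureReal_restrict_apply_univ] at this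
  have h01 : μ.real A = 0 ∨ μ.real A = 1 := by
    rcases eq_or_ne (μ.real A) 0 with h0 | h0
    · exact Or.inl h0
    · exact Or.inr (mul_right_cancel₀ h0 (by linarith))
  rcases h01 with h0 | h0
  · exact Or.inl ((measureReal_eq_zero_iff).1 h0)
  · right
    rw [measureReal_def, ENNReal.toReal_eq_one_iff] at h0
    exact h0

/-- Conditional independence makes the entropy of the product partition at least twice the
conditional entropy: integrate the additivity of entropy on product distributions and apply
Jensen's inequality. -/
lemma IsCondJoining.two_mul_condInfo_le (h : IsCondJoining B μ ν) (hB : B ≤ mX)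
    {p : X → ι} (hp : MeasPart p) :
    2 * condInfo μ B p ≤ partInfo ν (fun z => (p z.1, p z.2)) := by
  set g : ι → X → ℝ := fun i => μ[(p ⁻¹' {i}).indicator (fun _ => (1 : ℝ)) | B]
  have hmem : ∀ᵐ x ∂μ, ∀ i, g i x ∈ Set.Icc (0 : ℝ) 1 :=
    ae_all_iff.2 fun i => condExp_ind_mem (μ := μ) (hp i)
  have hsum : ∀ᵐ x ∂μ, ∑ i, g i x = 1 := condExp_ind_sum hB hp
  have hgm : ∀ i, AEStronglyMeasurable (g i) μ :=
    fun i => integrable_condExp.aestronglyMeasurable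
  have hprodm : ∀ i j, AEStronglyMeasurable (fun x => g i x * g j x) μ :=
    fun i j => (hgm i).mul (hgm j)
  have hprodmem : ∀ i j, ∀ᵐ x ∂μ, g i x * g j x ∈ Set.Icc (0 : ℝ) 1 := by
    intro i j
    filter_upwards [hmem] with x hx
    exact ⟨mul_nonneg (hx i).1 (hx j).1, mul_le_one₀ (hx i).2 (hx j).1 (hx j).2⟩
  have hη : ∀ i j, Integrable (fun x => Real.negMulLog (g i x * g j x)) μ := fun i j =>
    integrable_negMulLog (hprodm i j) (hprodmem i j)
  have hprodint : ∀ i j, Integrable (fun x => g i x * g j x) μ := by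
    intro i j
    refine Integrable.of_bound (C := 1) (hprodm i j) ?_
    filter_upwards [hprodmem i j] with x hx
    rw [Real.norm_eq_abs, abs_of_nonneg hx.1]
    exact hx.2
  have e1 : 2 * condInfo μ B p = ∫ x, ∑ i, ∑ j, Real.negMulLog (g i x * g j x) ∂μ := by
    unfold condInfo
    rw [← integral_const_mul]
    refine integral_congr_ae ?_
    filter_upwards [hsum] with x hx
    simp_rw [Real.negMulLog_mul, Finset.sum_add_distrib, ← Finset.sum_mul, ← Finset.mul_sum,
      ← Finset.sum_mul, hx]
    change 2 * ∑ i, Real.negMulLog (g i x) = _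
    ring
  rw [e1, integral_finsetSum _ fun i _ => integrable_finsetSum _ fun j _ => hη i j, partInfo,
    Fintype.sum_prod_type]
  refine Finset.sum_le_sum fun i _ => ?_
  rw [integral_finsetSum _ fun j _ => hη i j]
  refine Finset.sum_le_sum fun j _ => ?_
  have hset : (fun z : X × X => (p z.1, p z.2)) ⁻¹' {(i, j)} = (p ⁻¹' {i}) ×ˢ (p ⁻¹' {j}) := by
    ext z
    simp
  rw [hset]
  change _ ≤ Real.negMulLog (ν.real _)
  rw [h _ _ (hp i) (hp j)]
  exact Real.concaveOn_negMulLog.le_map_integral Real.continuous_negMulLog.continuousOn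
    isClosed_Ici (by filter_upwards [hprodmem i j] with x hx using hx.1) (hprodint i j) (hη i j)

/-- A self-joining that is relatively independent over a σ-algebra contained in the remote future
of `p` has entropy `2 h_μ(f, p)` along the product partition: the upper bound holds for every
self-joining, and the lower bound because the remote future gives no information on the present
beyond the entropy rate (`mul_entropyOfPart_le_condInfo`). -/
lemma IsCondJoining.entropyOfPart_eq (h : IsCondJoining B μ ν) (hB : B ≤ mX)
    {f : X → X} (hf : MeasurePreserving f μ μ) {p : X → ι} (hp : MeasPart p)
    (htail : ∀ n : ℕ, B ≤ ⨆ i : ℕ, sigmaPart (fun x => p (f^[n + i] x))) :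
    entropyOfPart ν (Prod.map f f) (fun z => (p z.1, p z.2)) = 2 * entropyOfPart μ f p := by
  have href : ∀ n, partInfo ν (refinePart (Prod.map f f) (fun z => (p z.1, p z.2)) n)
      = partInfo ν (fun z => (refinePart f p n z.1, refinePart f p n z.2)) := by
    intro n
    refine partInfo_congr fun x y => ?_
    simp only [Prod.mk.injEq, refinePart_eq_iff, Prod.map_iterate, Prod.map_fst, Prod.map_snd]
    exact ⟨fun h => ⟨fun k hk => (h k hk).1, fun k hk => (h k hk).2⟩,
      fun h k hk => ⟨h.1 k hk, h.2 k hk⟩⟩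
  apply le_antisymm
  · have hhalf : entropyOfPart ν (Prod.map f f) (fun z => (p z.1, p z.2)) / 2
        ≤ entropyOfPart μ f p := by
      refine le_entropyOfPart fun n hn => ?_
      have h1 := mul_entropyOfPart_le (μ := ν) (Prod.map f f) (fun z => (p z.1, p z.2)) n
      have hr := hp.refine hf.measurable n
      have h2 := partInfo_pair_le (μ := ν) (hr.comp_meas measurable_fst)
        (hr.comp_meas measurable_snd)
      rw [partInfo_comp_preserving (h.fst hB) hr, partInfo_comp_preserving (h.snd hB) hr] at h2
      rw [href] at h1
      linarith
    linarith
  · refine le_entropyOfPart fun n _ => ?_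
    rw [href]
    have h1 := h.two_mul_condInfo_le hB (hp.refine hf.measurable n)
    have h2 := mul_entropyOfPart_le_condInfo hf hp n (htail n)
    linarith

end Joining


/-! ### The generating partition of an expansive homeomorphism -/

section Generator

lemma exists_measPart_dist_le [MetricSpace X] [CompactSpace X] [MeasurableSpace X]
    [BorelSpace X] {ε : ℝ} (hε : 0 < ε) :
    ∃ (r : ℕ) (α : X → Fin r), MeasPart α ∧ ∀ x y, α x = α y → dist x y ≤ ε := by
  classical
  obtain ⟨t, -, htf, ht⟩ :=
    (isCompact_univ (X := X)).finite_cover_balls (half_pos hε)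
  obtain ⟨r, c, hc⟩ : ∃ (r : ℕ) (c : Fin r → X), Set.range c = t := by
    lift t to Finset X using htf
    exact ⟨t.card, fun i => t.equivFin.symm i, by
      rw [Set.range_comp' Subtype.val, t.equivFin.symm.surjective.range_eq]; simp⟩
  have hcov : ∀ x, ∃ i, x ∈ Metric.ball (c i) (ε / 2) := by
    intro x
    have := ht (Set.mem_univ x)
    simp only [Set.mem_iUnion] at this
    obtain ⟨y, hy, hx⟩ := this
    rw [← hc] at hy
    obtain ⟨i, rfl⟩ := hy
    exact ⟨i, hx⟩
  -- each point is sent to the least index of a ball of the cover containing it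
  refine ⟨r, fun x => Fin.find (fun i => x ∈ Metric.ball (c i) (ε / 2)) (hcov x), ?_, ?_⟩
  · intro i
    have : (fun x => Fin.find (fun i => x ∈ Metric.ball (c i) (ε / 2)) (hcov x)) ⁻¹' {i}
        = Metric.ball (c i) (ε / 2) ∩ ⋂ j : Fin r, ⋂ _ : j < i, (Metric.ball (c j) (ε / 2))ᶜ := by
      ext x
      simp only [Set.mem_preimage, Set.mem_singleton_iff, Fin.find_eq_iff, Set.mem_inter_iff,
        Set.mem_iInter, Set.mem_compl_iff]
    rw [this]
    exact measurableSet_ball.inter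
      (MeasurableSet.iInter fun j => MeasurableSet.iInter fun _ => measurableSet_ball.compl)
  · intro x y hxy
    have hx := Fin.find_spec (hcov x)
    have hy := Fin.find_spec (hcov y)
    simp only at hxy
    rw [← hxy] at hy
    rw [Metric.mem_ball] at hx hy
    linarith [dist_triangle_right x y (c (Fin.find _ (hcov x)))]

variable [mX : MeasurableSpace X] {f finv : X → X} {ι : Type} [Fintype ι] {α : X → ι}

/-- A finite partition whose itineraries separate points generates the σ-algebra of a standard
Borel space, because an injective measurable map between such spaces is a Borel isomorphism
onto its image. -/
lemma le_iSup_sigmaPart_of_injective [StandardBorelSpace X] (hf : Measurable f)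
    (hfinv : Measurable finv) (hα : MeasPart α)
    (hinj : ∀ x y, (∀ n, α (f^[n] x) = α (f^[n] y) ∧ α (finv^[n] x) = α (finv^[n] y)) → x = y) :
    mX ≤ ⨆ n : ℕ, (sigmaPart (fun x => α (f^[n] x)) ⊔ sigmaPart (fun x => α (finv^[n] x))) := by
  let _ : MeasurableSpace ι := ⊤
  let _ : TopologicalSpace ι := ⊥
  have : DiscreteTopology ι := ⟨rfl⟩
  have : DiscreteMeasurableSpace ι := ⟨fun _ => trivial⟩
  have hαm : Measurable α := fun s _ => hα.preimage s
  let code : X → ℕ → ι × ι := fun x n => (α (f^[n] x), α (finv^[n] x))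
  have hcm : Measurable code := measurable_pi_lambda _ fun n =>
    (hαm.comp (hf.iterate n)).prodMk (hαm.comp (hfinv.iterate n))
  have hci : Function.Injective code := fun x y h => hinj x y fun n => by
    have := congrFun h n
    simpa only [code, Prod.mk.injEq] using this
  rw [← (hcm.measurableEmbedding hci).comap_eq, MeasurableSpace.pi, MeasurableSpace.comap_iSup]
  refine iSup_mono fun n => ?_
  rw [MeasurableSpace.comap_comp]
  change MeasurableSpace.comap _ (MeasurableSpace.comap _ _ ⊔ MeasurableSpace.comap _ _) ≤ _
  rw [MeasurableSpace.comap_sup, MeasurableSpace.comap_comp, MeasurableSpace.comap_comp]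
  exact le_rfl

/-- If the itineraries of a partition generate, the partition into pairs of atoms generates the
product σ-algebra along its symmetric refinements. -/
lemma prod_le_iSup_sigmaPart (hright : Function.RightInverse finv f)
    (hgen : mX ≤ ⨆ n : ℕ, (sigmaPart (fun x => α (f^[n] x)) ⊔ sigmaPart (fun x => α (finv^[n] x)))) :
    (Prod.instMeasurableSpace : MeasurableSpace (X × X)) ≤
      ⨆ k : ℕ, sigmaPart (fun z => refinePart (Prod.map f f)
        (fun z : X × X => (α z.1, α z.2)) (2 * k + 1) ((Prod.map finv finv)^[k] z)) := by
  have hcancel : ∀ (n : ℕ) (x : X), f^[2 * n] (finv^[n] x) = f^[n] x := by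
    intro n x
    rw [two_mul, Function.iterate_add_apply, (hright.iterate n) x]
  change MeasurableSpace.comap _ _ ⊔ MeasurableSpace.comap _ _ ≤ _
  refine sup_le ?_ ?_
  · refine (MeasurableSpace.comap_mono hgen).trans ?_
    rw [MeasurableSpace.comap_iSup]
    refine iSup_mono fun n => ?_
    rw [MeasurableSpace.comap_sup, MeasurableSpace.comap_comp, MeasurableSpace.comap_comp]
    refine sup_le (sigmaPart_mono (fun w => (w ⟨2 * n, by omega⟩).1) fun z => ?_)
      (sigmaPart_mono (fun w => (w ⟨0, by omega⟩).1) fun z => ?_)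
    · simp [refinePart, Prod.map_iterate, hcancel]
    · simp [refinePart, Prod.map_iterate]
  · refine (MeasurableSpace.comap_mono hgen).trans ?_
    rw [MeasurableSpace.comap_iSup]
    refine iSup_mono fun n => ?_
    rw [MeasurableSpace.comap_sup, MeasurableSpace.comap_comp, MeasurableSpace.comap_comp]
    refine sup_le (sigmaPart_mono (fun w => (w ⟨2 * n, by omega⟩).2) fun z => ?_)
      (sigmaPart_mono (fun w => (w ⟨0, by omega⟩).2) fun z => ?_)
    · simp [refinePart, Prod.map_iterate, hcancel]
    · simp [refinePart, Prod.map_iterate]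

end Generator

/-! ### The remote future of a partition -/

section Future

set_option linter.unusedSectionVars false

/-- The σ-algebra generated by the future `α, α ∘ f, α ∘ f², …` of a partition. -/
abbrev future (f : X → X) {ι : Type} (α : X → ι) : MeasurableSpace X :=
  ⨆ i : ℕ, sigmaPart (fun x => α (f^[i] x))

/-- The remote future `⋂ₙ f⁻ⁿ K`, where `K` is the future σ-algebra of the partition. A set `A`
lies in `f⁻ⁿ K` exactly when `fⁿ A = (finvⁿ)⁻¹ A` lies in `K`, whence the use of
`MeasurableSpace.map`. -/
abbrev remoteFuture (f finv : X → X) {ι : Type} (α : X → ι) : MeasurableSpace X :=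
  ⨅ n : ℕ, (future f α).map (finv^[n])

variable [mX : MeasurableSpace X] {f finv : X → X} {ι : Type} [Fintype ι] {α : X → ι}

lemma measurableSet_remoteFuture {A : Set X} :
    MeasurableSet[remoteFuture f finv α] A ↔
      ∀ n : ℕ, MeasurableSet[future f α] ((finv^[n]) ⁻¹' A) :=
  MeasurableSpace.measurableSet_iInf

lemma future_le (hf : Measurable f) (hα : MeasPart α) : future f α ≤ mX :=
  iSup_le fun i => (hα.comp_meas (hf.iterate i)).sigmaPart_le

lemma comap_iterate_future (n : ℕ) :
    (future f α).comap (f^[n]) = ⨆ i : ℕ, sigmaPart (fun x => α (f^[n + i] x)) := by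
  rw [future, MeasurableSpace.comap_iSup]
  refine iSup_congr fun i => ?_
  rw [MeasurableSpace.comap_comp]
  congr 1
  ext x
  simp only [Function.comp_apply, ← Function.iterate_add_apply, add_comm n i]

lemma future_le_map : future f α ≤ (future f α).map f := by
  rw [← MeasurableSpace.comap_le_iff_le_map]
  have := comap_iterate_future (f := f) (α := α) 1
  rw [Function.iterate_one] at this
  rw [this]
  exact iSup_le fun i => le_iSup (fun i => sigmaPart fun x => α (f^[i] x)) (1 + i)

lemma iSup_future_map (hf : Measurable f) (hfinv : Measurable finv)
    (hleft : Function.LeftInverse finv f) (hright : Function.RightInverse finv f)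
    (hα : MeasPart α)
    (hgen : mX ≤ ⨆ n : ℕ, (sigmaPart (fun x => α (f^[n] x)) ⊔ sigmaPart (fun x => α (finv^[n] x)))) :
    (⨆ n : ℕ, (future f α).map (f^[n])) = mX := by
  apply le_antisymm
  · refine iSup_le fun n _ hA => ?_
    have h1 := future_le hf hα _ hA
    have h2 := (hfinv.iterate n) h1
    rwa [← Set.preimage_comp, (hright.iterate n).comp_eq_id, Set.preimage_id] at h2
  · refine hgen.trans (iSup_le fun n => sup_le ?_ ?_)
    · refine le_trans ?_ (le_iSup (fun n => (future f α).map (f^[n])) 0)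
      exact le_iSup (fun i => sigmaPart fun x => α (f^[i] x)) n
    · refine le_trans ?_ (le_iSup (fun n => (future f α).map (f^[n])) n)
      rw [← MeasurableSpace.comap_le_iff_le_map, MeasurableSpace.comap_comp]
      refine le_trans (sigmaPart_mono id fun x => ?_)
        (le_iSup (fun i => sigmaPart fun x => α (f^[i] x)) 0)
      simp [(hleft.iterate n) x]

lemma remoteFuture_le (hf : Measurable f) (hα : MeasPart α) : remoteFuture f finv α ≤ mX :=
  fun A hA => future_le hf hα _ (measurableSet_remoteFuture.1 hA 0)

lemma measurableSet_remoteFuture_preimage_inv {A : Set X}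
    (hA : MeasurableSet[remoteFuture f finv α] A) :
    MeasurableSet[remoteFuture f finv α] (finv ⁻¹' A) := by
  rw [measurableSet_remoteFuture] at hA ⊢
  intro n
  have := hA (n + 1)
  rwa [Function.iterate_succ', Set.preimage_comp] at this

lemma measurableSet_remoteFuture_preimage (hright : Function.RightInverse finv f) {A : Set X}
    (hA : MeasurableSet[remoteFuture f finv α] A) :
    MeasurableSet[remoteFuture f finv α] (f ⁻¹' A) := by
  rw [measurableSet_remoteFuture] at hA ⊢
  rintro (_ | n)
  · exact future_le_map _ (hA 0)
  · have := hA n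
    rwa [Function.iterate_succ', Set.preimage_comp, ← Set.preimage_comp (f := finv),
      hright.comp_eq_id, Set.preimage_id]

lemma remoteFuture_le_iSup (hleft : Function.LeftInverse finv f) (n : ℕ) :
    remoteFuture f finv α ≤ ⨆ i : ℕ, sigmaPart (fun x => α (f^[n + i] x)) := by
  rw [← comap_iterate_future]
  intro A hA
  refine ⟨_, measurableSet_remoteFuture.1 hA n, ?_⟩
  rw [← Set.preimage_comp, (hleft.iterate n).comp_eq_id, Set.preimage_id]

end Future

/-! ### The Ledrappier criterion -/

/-- **Proposition 3.4 (subadditive Ledrappier criterion).** Let `(X,f)` be an expansive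
homeomorphism of a compact metric space and `Φ = {log φ_n}` a subadditive potential with
a unique equilibrium state `μ`. If `μ×μ` is the unique equilibrium state on
`(X×X, f×f)` for `Ψ` with `ψ_n(x,y) = φ_n(x)·φ_n(y)`, then `μ` has the K-property. -/
theorem hasKProperty_of_product_unique_eqState
    {X : Type*} [MetricSpace X] [CompactSpace X] [MeasurableSpace X] [BorelSpace X]
    (f finv : X → X) (hf : Continuous f) (hfinv : Continuous finv)
    (hleft : Function.LeftInverse finv f) (hright : Function.RightInverse finv f)
    (hexp : IsExpansive dist f finv)
    (φ : ℕ → X → ℝ) (hφ : IsSubadditivePotential f φ)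
    (μ : Measure X) (hEq : IsEqState dist f φ μ)
    (hUnique : ∀ ν : Measure X, IsEqState dist f φ ν → ν = μ)
    (hEqProd : IsEqState dist (Prod.map f f) (fun n p => φ n p.1 * φ n p.2) (μ.prod μ))
    (hUniqueProd : ∀ ν : Measure (X × X),
      IsEqState dist (Prod.map f f) (fun n p => φ n p.1 * φ n p.2) ν → ν = μ.prod μ) :
    HasKProperty μ f finv := by
  have hμ : IsProbabilityMeasure μ := hEq.1
  have hpres : MeasurePreserving f μ μ := hEq.2.1
  have hfm := hf.measurable
  have hfim := hfinv.measurable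
  obtain ⟨ε, hε, hsep⟩ := hexp
  obtain ⟨r, α, hα, hαd⟩ := exists_measPart_dist_le (X := X) hε
  have hgen := le_iSup_sigmaPart_of_injective hfm hfim hα fun x y h =>
    hsep x y fun n => ⟨hαd _ _ (h n).1, hαd _ _ (h n).2⟩
  have hT := remoteFuture_le (finv := finv) hfm hα
  have hβ : MeasPart (fun z : X × X => (α z.1, α z.2)) :=
    (hα.comp_meas measurable_fst).pair (hα.comp_meas measurable_snd)
  -- invariant measures on the product are compared through the single partition `α × α`
  have hKS : ∀ ν : Measure (X × X), IsProbabilityMeasure ν → MeasurePreserving (Prod.map f f) ν ν →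
      entropyKS ν (Prod.map f f)
        = entropyOfPart ν (Prod.map f f) (fun z : X × X => (α z.1, α z.2)) :=
    fun ν _ hν => entropyKS_eq_of_generator hν (hfim.prodMap hfim) (hleft.prodMap hleft)
      (hright.prodMap hright) hβ (prod_le_iSup_sigmaPart hright hgen)
  -- the relatively independent self-joining over the remote future is an equilibrium state
  obtain ⟨ν, hνp, hν⟩ := exists_isCondJoining (μ := μ) hT
  have hνF : MeasurePreserving (Prod.map f f) ν ν := hν.measurePreserving hpres hleft hT
    (fun _ => measurableSet_remoteFuture_preimage hright)
    (fun _ => measurableSet_remoteFuture_preimage_inv)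
  have hint : ∀ n, Integrable (fun x => Real.log (φ n x)) μ := fun n =>
    ((hφ.1 n).log fun x => (hφ.2.1 n x).ne').integrable_of_hasCompactSupport
      (HasCompactSupport.of_compactSpace _)
  -- the integrals of `log ψ_n` only see the marginals
  have hmarg : ∀ {ρ : Measure (X × X)}, MeasurePreserving Prod.fst ρ μ →
      MeasurePreserving Prod.snd ρ μ → ∀ n,
      ∫ z, Real.log (φ n z.1 * φ n z.2) ∂ρ = 2 * ∫ x, Real.log (φ n x) ∂μ := by
    intro ρ h1 h2 n
    simp_rw [fun z : X × X => Real.log_mul (hφ.2.1 n z.1).ne' (hφ.2.1 n z.2).ne']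
    have i1 : Integrable (fun z : X × X => Real.log (φ n z.1)) ρ :=
      h1.integrable_comp_of_integrable (hint n)
    have i2 : Integrable (fun z : X × X => Real.log (φ n z.2)) ρ :=
      h2.integrable_comp_of_integrable (hint n)
    rw [integral_add i1 i2, two_mul]
    congr 1
    · rw [← h1.map_eq, integral_map h1.measurable.aemeasurable]
      rw [h1.map_eq]
      exact (hint n).aestronglyMeasurable
    · rw [← h2.map_eq, integral_map h2.measurable.aemeasurable]
      rw [h2.map_eq]
      exact (hint n).aestronglyMeasurable
  obtain ⟨hpp, hpF, L, hL, hP⟩ := hEqProd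
  have hent : entropyKS ν (Prod.map f f) = entropyKS (μ.prod μ) (Prod.map f f) := by
    rw [hKS ν hνp hνF, hKS _ hpp hpF,
      hν.entropyOfPart_eq hT hpres hα (remoteFuture_le_iSup hleft),
      isCondJoining_bot.entropyOfPart_eq bot_le hpres hα fun _ => bot_le]
  have hνeq : ν = μ.prod μ := by
    refine hUniqueProd ν ⟨hνp, hνF, L, ?_, by rw [hent, hP]⟩
    simp only [hmarg measurePreserving_fst measurePreserving_snd] at hL
    simpa only [hmarg (hν.fst hT) (hν.snd hT)] using hL
  subst hνeq
  exact ⟨future f α, future_le hfm hα, future_le_map,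
    iSup_future_map hfm hfim hleft hright hα hgen,
    fun _ hA => measure_zero_or_one_of_isCondJoining_prod hν hT hA⟩

end SubEq
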